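/- For all units a, b in O_K^× = W(F_q)^×, the element 1 - a^{q-1} is divisible by p, and the assignment a ↦ c_a is a group homomorphism O_K^× → F_q: if x_a, x_b, x_{ab} ∈ O_K satisfy p·x_a = 1 - a^{q-1}, p·x_b = 1 - b^{q-1} and p·x_{ab} = 1 - (a·b)^{q-1}, then the residues satisfy x̄_{ab} = x̄_a + x̄_b in F_q. -/

import Mathlib

/-!
Write `1 - u = π x` and `1 - v = π y`. Expanding `(1 - π x) (1 - π y)` gives
`1 - u v = π (x + y - π x y)`, so dividing by `π` turns products into sums up to a multiple of `π`,
which the residue map kills. For `u = a ^ (q - 1)` with `a` a unit of `W(F_q)`, divisibility by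
`π = p` is Fermat's little theorem in the residue field.
-/

section ResidueOfQuotient

variable {A B : Type*} [CommRing A] [CommRing B] {π u v x y z : A}

theorem eq_add_sub_mul_of_mul_eq_one_sub (hπ : IsLeftRegular π) (hx : π * x = 1 - u)
    (hy : π * y = 1 - v) (hz : π * z = 1 - u * v) : z = x + y - π * (x * y) := by
  have hu : u = 1 - π * x := by rw [hx, sub_sub_cancel]
  have hv : v = 1 - π * y := by rw [hy, sub_sub_cancel]
  refine hπ ?_
  calc π * z = 1 - (1 - π * x) * (1 - π * y) := by rw [hz, ← hu, ← hv]
    _ = π * (x + y - π * (x * y)) := by ring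

theorem map_eq_add_of_mul_eq_one_sub (φ : A →+* B) (hφ : φ π = 0) (hπ : IsLeftRegular π)
    (hx : π * x = 1 - u) (hy : π * y = 1 - v) (hz : π * z = 1 - u * v) :
    φ z = φ x + φ y := by
  rw [eq_add_sub_mul_of_mul_eq_one_sub hπ hx hy hz, map_sub, map_mul, hφ, zero_mul, sub_zero,
    map_add]

end ResidueOfQuotient

section PerfectRing

variable (p : ℕ) [Fact p.Prime] {k : Type*} [CommRing k] [CharP k p] [PerfectRing k p]

theorem isLeftRegular_natCast_wittVector : IsLeftRegular (p : WittVector p k) :=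
  isLeftRegular_of_non_zero_divisor _ fun x hx =>
    WittVector.eq_zero_of_p_mul_eq_zero x ((mul_comm x _).trans hx)

theorem natCast_dvd_one_sub_iff_coeff_zero_eq_one (u : WittVector p k) :
    (p : WittVector p k) ∣ 1 - u ↔ u.coeff 0 = 1 := by
  rw [← Ideal.mem_span_singleton, ← WittVector.ker_constantCoeff, RingHom.sub_mem_ker_iff, map_one,
    WittVector.constantCoeff_apply, eq_comm]

variable (k) in
theorem statement0_general (n : ℕ) :
    (∀ a : WittVector p k, a.coeff 0 ^ n = 1 →
      ∃ x : WittVector p k, (p : WittVector p k) * x = 1 - a ^ n) ∧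
    (∀ a b xa xb xab : WittVector p k,
      (p : WittVector p k) * xa = 1 - a ^ n →
      (p : WittVector p k) * xb = 1 - b ^ n →
      (p : WittVector p k) * xab = 1 - (a * b) ^ n →
      xab.coeff 0 = xa.coeff 0 + xb.coeff 0) := by
  refine ⟨fun a ha => ?_, fun a b xa xb xab hxa hxb hxab => ?_⟩
  · have h_residue : (a ^ n).coeff 0 = 1 := by
      rw [← WittVector.constantCoeff_apply, map_pow, WittVector.constantCoeff_apply, ha]
    obtain ⟨x, hx⟩ := (natCast_dvd_one_sub_iff_coeff_zero_eq_one p (a ^ n)).mpr h_residue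
    exact ⟨x, hx.symm⟩
  · rw [mul_pow] at hxab
    exact map_eq_add_of_mul_eq_one_sub WittVector.constantCoeff (WittVector.coeff_p_zero p k)
      (isLeftRegular_natCast_wittVector p) hxa hxb hxab

end PerfectRing

theorem coeff_zero_unit_pow_card_sub_one {p : ℕ} [Fact p.Prime] {F : Type*} [Field F]
    [Fintype F] (a : (WittVector p F)ˣ) :
    (a : WittVector p F).coeff 0 ^ (Fintype.card F - 1) = 1 :=
  FiniteField.pow_card_sub_one_eq_one _ (a.isUnit.map WittVector.constantCoeff).ne_zero

/-- For all units `a, b` in `O_K^× = W(F_q)^×`, the element `1 - a^(q-1)` is divisible by `p`,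
and `a ↦ c_a` (the residue of `(1 - a^(q-1))/p`) is a group homomorphism `O_K^× → F_q`. -/
theorem statement0 (p f : ℕ) [Fact p.Prime] (hf : 1 ≤ f)
    (Fq : Type) [Field Fq] [Fintype Fq] (hcard : Fintype.card Fq = p ^ f) :
    (∀ a : (WittVector p Fq)ˣ, ∃ x : WittVector p Fq,
      (p : WittVector p Fq) * x = 1 - (a : WittVector p Fq) ^ (p ^ f - 1)) ∧
    (∀ (a b : (WittVector p Fq)ˣ) (xa xb xab : WittVector p Fq),
      (p : WittVector p Fq) * xa = 1 - (a : WittVector p Fq) ^ (p ^ f - 1) →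
      (p : WittVector p Fq) * xb = 1 - (b : WittVector p Fq) ^ (p ^ f - 1) →
      (p : WittVector p Fq) * xab
        = 1 - ((a : WittVector p Fq) * (b : WittVector p Fq)) ^ (p ^ f - 1) →
      xab.coeff 0 = xa.coeff 0 + xb.coeff 0) := by
  have : CharP Fq p := charP_of_card_eq_prime_pow hcard
  obtain ⟨h_dvd, h_mul⟩ := statement0_general p Fq (p ^ f - 1)
  exact ⟨fun a => h_dvd a (hcard ▸ coeff_zero_unit_pow_card_sub_one a), fun a b => h_mul a b⟩
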